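/- Let p ≥ 1 and m = k·2^z with k odd. Let ℓ be an integer with 1 ≤ ℓ ≤ 2^z−1. Then for all n ∈ ℕ and all e < 2^{pn}: [m divides e and s(e/m) = 1] if and only if [m divides 2^{pn}·k·ℓ + e and s((2^{pn}·k·ℓ + e)/m) = 1 + s(ℓ)]. [This shows that in the projected automaton Π(A_{m,2^p} × A_{T,2^p}) the states (0, B) and (kℓ, B_ℓ) accept the same language.] -/

import Mathlib

/-- The parity (in `ZMod 2`) of the number of 1s in the binary expansion of `n`. -/
def sTM (n : ℕ) : ZMod 2 := ((Nat.digits 2 n).count 1 : ZMod 2)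

theorem sTM_zero : sTM 0 = 0 := by simp [sTM]

theorem sTM_even (n : ℕ) : sTM (2 * n) = sTM n := by
  rcases Nat.eq_zero_or_pos n with h | h
  · subst h; rfl
  · unfold sTM
    have := Nat.digits_add 2 (by norm_num) 0 n (by norm_num) (Or.inr h.ne')
    rw [zero_add] at this
    rw [this]
    simp

theorem sTM_odd (n : ℕ) : sTM (2 * n + 1) = sTM n + 1 := by
  unfold sTM
  have := Nat.digits_add 2 (by norm_num) 1 n (by norm_num) (Or.inl (by norm_num))
  rw [add_comm (2 * n) 1, this]
  simp

theorem sTM_add (a : ℕ) : ∀ x y : ℕ, y < 2 ^ a → sTM (2 ^ a * x + y) = sTM x + sTM y := by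
  induction a with
  | zero =>
    intro x y hy
    have : y = 0 := by simpa using hy
    subst this
    simp [sTM_zero]
  | succ a ih =>
    intro x y hy
    rw [pow_succ] at hy
    rcases Nat.even_or_odd' y with ⟨c, h | h⟩
    · have e1 : 2 ^ (a + 1) * x + y = 2 * (2 ^ a * x + c) := by rw [h]; ring
      rw [e1, h, sTM_even, sTM_even, ih x c (by omega)]
    · have e1 : 2 ^ (a + 1) * x + y = 2 * (2 ^ a * x + c) + 1 := by rw [h]; ring
      rw [e1, h, sTM_odd, sTM_odd, ih x c (by omega), add_assoc]

theorem sTM_pow (a x : ℕ) : sTM (2 ^ a * x) = sTM x := by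
  have := sTM_add a x 0 (by positivity)
  simpa [sTM_zero] using this

theorem class_0B_indistinguishable (p m k z : ℕ) (hp : 1 ≤ p) (hkodd : Odd k)
    (hm : m = k * 2 ^ z)
    (ℓ : ℕ) (hℓ1 : 1 ≤ ℓ) (hℓ2 : ℓ ≤ 2 ^ z - 1) :
    ∀ n e : ℕ, e < 2 ^ (p * n) →
      ((m ∣ e ∧ sTM (e / m) = 1) ↔
       (m ∣ 2 ^ (p * n) * (k * ℓ) + e ∧
         sTM ((2 ^ (p * n) * (k * ℓ) + e) / m) = 1 + sTM ℓ)) := by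
  intro n e he
  generalize p * n = N at *
  have hk : 0 < k := hkodd.pos
  have hmpos : 0 < m := by rw [hm]; positivity
  rcases le_or_gt z N with hz | hz
  · obtain ⟨d, rfl⟩ := Nat.exists_eq_add_of_le hz
    have e1 : 2 ^ (z + d) * (k * ℓ) = m * (2 ^ d * ℓ) := by rw [hm]; ring
    rw [e1, Nat.dvd_add_right (Dvd.intro _ rfl), Nat.mul_add_div hmpos]
    have hlt : e / m < 2 ^ d := by
      rw [Nat.div_lt_iff_lt_mul hmpos]
      refine he.trans_le ?_
      rw [hm, pow_add]
      calc 2 ^ z * 2 ^ d = 2 ^ d * (1 * 2 ^ z) := by ring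
        _ ≤ _ := by gcongr; omega
    rw [sTM_add d _ _ hlt, add_comm (sTM ℓ), add_left_inj]
  · have hNz : 2 ^ N < 2 ^ z := Nat.pow_lt_pow_right (by norm_num) hz
    have hzm : 2 ^ z ≤ m := by rw [hm]; exact Nat.le_mul_of_pos_left _ hk
    constructor
    · rintro ⟨h1, h2⟩
      have : e = 0 := Nat.eq_zero_of_dvd_of_lt h1 (by omega)
      subst this
      simp [sTM_zero] at h2
    · rintro ⟨h1, h2⟩
      have hd : 2 ^ N ∣ m := by
        rw [hm]; exact Dvd.dvd.mul_left (pow_dvd_pow 2 hz.le) k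
      have h3 : 2 ^ N ∣ e := (Nat.dvd_add_right (Dvd.intro _ rfl)).1 (hd.trans h1)
      have : e = 0 := Nat.eq_zero_of_dvd_of_lt h3 he
      subst this
      exfalso
      obtain ⟨q, hq⟩ := h1
      rw [hq, Nat.mul_div_cancel_left _ hmpos] at h2
      have h4 : 2 ^ N * ℓ = 2 ^ z * q := by
        apply Nat.eq_of_mul_eq_mul_left hk
        rw [hm] at hq
        linarith
      have h5 : sTM q = sTM ℓ := by rw [← sTM_pow z q, ← h4, sTM_pow]
      rw [h5] at h2
      simp at h2
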